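/- Let N ≥ 3, let β > 0, let p, q > 1 satisfy N/(p+1) + N/(q+1) > N - 2, and set r = (q+1)/q. Then there exist C > 0 and α₀ > 0 such that for every α ≥ α₀ there exists u ∈ 𝒟 with R(u) = (∫_B |x|^{-β(r-1)} |Δu(x)|^r dx) / (∫_B |x|^α |u(x)|^{p+1} dx)^{r/(p+1)} ≤ C α^{2r - N + Nr/(p+1)}; equivalently S_{α,β} ≤ C α^{2r - N + Nr/(p+1)} for all α ≥ α₀. -/

import Mathlib

open MeasureTheory Metric Set Filter

noncomputable section

abbrev E (N : ℕ) := EuclideanSpace ℝ (Fin N)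

/-- The Laplacian: sum of pure second partial derivatives. -/
def lap {N : ℕ} (u : E N → ℝ) (x : E N) : ℝ :=
  ∑ i, fderiv ℝ (fun y => fderiv ℝ u y (EuclideanSpace.single i 1)) x (EuclideanSpace.single i 1)
/-- The admissible class 𝒟: C² functions on the closed unit ball, vanishing on the
boundary sphere, not identically zero. -/
def memD {N : ℕ} (u : E N → ℝ) : Prop :=
  ContDiffOn ℝ 2 u (closedBall 0 1) ∧
  (∀ x : E N, ‖x‖ = 1 → u x = 0) ∧
  ∃ x ∈ closedBall (0 : E N) 1, u x ≠ 0

/-- A function is radial if its value depends only on the norm. -/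
def radial {N : ℕ} (u : E N → ℝ) : Prop := ∀ x y : E N, ‖x‖ = ‖y‖ → u x = u y

/-- The weighted second-order Rayleigh quotient
R(u) = (∫_B |x|^{-β(r-1)} |Δu|^r) / (∫_B |x|^α |u|^{p+1})^{r/(p+1)}. -/
def ray2 {N : ℕ} (α β p r : ℝ) (u : E N → ℝ) : ℝ :=
  (∫ x in ball (0 : E N) 1, ‖x‖ ^ (-β * (r - 1)) * |lap u x| ^ r) /
    (∫ x in ball (0 : E N) 1, ‖x‖ ^ α * |u x| ^ (p + 1)) ^ (r / (p + 1))

/-- The ground-state level S_{α,β}. -/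
def S2 (N : ℕ) (α β p r : ℝ) : ℝ :=
  sInf {c | ∃ u : E N → ℝ, memD u ∧ ray2 α β p r u = c}

/-- The radial ground-state level S^rad_{α,β}. -/
def S2rad (N : ℕ) (α β p r : ℝ) : ℝ :=
  sInf {c | ∃ u : E N → ℝ, memD u ∧ radial u ∧ ray2 α β p r u = c}

lemma fderiv_scale {N : ℕ} {g : E N → ℝ} (hg : Differentiable ℝ g) (a : ℝ) (x0 y v : E N) :
    fderiv ℝ (fun x => g (a • (x - x0))) y v = a * fderiv ℝ g (a • (y - x0)) v := by
  have h1 : HasFDerivAt (fun x : E N => a • (x - x0)) (a • ContinuousLinearMap.id ℝ (E N)) y :=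
    ((hasFDerivAt_id y).sub_const x0).const_smul a
  have h2 := (hg (a • (y - x0))).hasFDerivAt.comp y h1
  have h3 : fderiv ℝ (fun x => g (a • (x - x0))) y = _ := h2.fderiv
  rw [h3]
  simp

lemma lap_scale {N : ℕ} {g : E N → ℝ} (hg : ContDiff ℝ 2 g) (a : ℝ) (x0 y : E N) :
    lap (fun x => g (a • (x - x0))) y = a ^ 2 * lap g (a • (y - x0)) := by
  unfold lap
  rw [Finset.mul_sum]
  refine Finset.sum_congr rfl fun i _ => ?_
  have hd : Differentiable ℝ g := hg.differentiable (by norm_num)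
  have hd2 : Differentiable ℝ (fun y => fderiv ℝ g y (EuclideanSpace.single i 1)) := by
    have : ContDiff ℝ 1 (fderiv ℝ g) := hg.fderiv_right (by norm_num)
    exact (this.differentiable (by norm_num)).clm_apply (differentiable_const _)
  have h1 : (fun y => fderiv ℝ (fun x => g (a • (x - x0))) y (EuclideanSpace.single i 1))
      = fun y => a * fderiv ℝ g (a • (y - x0)) (EuclideanSpace.single i 1) := by
    funext y; exact fderiv_scale hd a x0 y _
  rw [h1, fderiv_const_mul]
  · have := fderiv_scale hd2 a x0 y (EuclideanSpace.single i 1)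
    simp only [ContinuousLinearMap.smul_apply, smul_eq_mul]
    rw [this]; ring
  · exact (hd2.comp ((differentiable_id.sub_const x0).const_smul a)) y

lemma lap_eq_zero {N : ℕ} {g : E N → ℝ} {x : E N} (hx : x ∉ tsupport g) : lap g x = 0 := by
  unfold lap
  refine Finset.sum_eq_zero fun i _ => ?_
  by_contra h
  apply hx
  have h1 := tsupport_fderiv_apply_subset ℝ (f := g) (EuclideanSpace.single i (1 : ℝ))
  have h2 := tsupport_fderiv_apply_subset ℝ
    (f := fun y => fderiv ℝ g y (EuclideanSpace.single i (1 : ℝ))) (EuclideanSpace.single i (1 : ℝ))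
  exact h1 (h2 (subset_tsupport _ h))

lemma lap_continuous {N : ℕ} {g : E N → ℝ} (hg : ContDiff ℝ 2 g) : Continuous (lap g) := by
  unfold lap
  refine continuous_finset_sum _ fun i _ => ?_
  have h1 : ContDiff ℝ 1 (fun y => fderiv ℝ g y (EuclideanSpace.single i 1)) :=
    (hg.fderiv_right (m := 1) (by norm_num)).clm_apply contDiff_const
  exact (h1.continuous_fderiv (by norm_num)).clm_apply continuous_const

lemma lap_bound {N : ℕ} {g : E N → ℝ} (hg : ContDiff ℝ 2 g) (hs : HasCompactSupport g) :
    ∃ M : ℝ, 0 < M ∧ ∀ x, |lap g x| ≤ M := by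
  have h : HasCompactSupport (lap g) :=
    HasCompactSupport.intro hs (fun x hx => lap_eq_zero hx)
  obtain ⟨M, hM⟩ := h.exists_bound_of_continuous (lap_continuous hg)
  exact ⟨max M 1, by positivity, fun x => (hM x).trans (le_max_left _ _)⟩

lemma weight_low {α t : ℝ} (hα : 6 ≤ α) (ht : 1 - 3 / α ≤ t) : (1 / 2 : ℝ) ^ 6 ≤ t ^ α := by
  have hα0 : 0 < α := by linarith
  have h3 : 3 / α ≤ 1 / 2 := by rw [div_le_iff₀ hα0]; linarith
  have h1 := one_add_mul_self_le_rpow_one_add (s := -(3 / α)) (by linarith) (p := α / 6)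
    (by linarith)
  have h2 : 1 + α / 6 * -(3 / α) = 1 / 2 := by field_simp; norm_num
  rw [h2] at h1
  have h4 : (1 / 2 : ℝ) ≤ t ^ (α / 6) :=
    h1.trans (Real.rpow_le_rpow (by linarith) (by linarith) (by linarith))
  calc (1 / 2 : ℝ) ^ 6 ≤ (t ^ (α / 6)) ^ 6 := by gcongr
    _ = t ^ α := by
      rw [← Real.rpow_natCast, ← Real.rpow_mul (by linarith)]
      congr 1; push_cast; ring

lemma ray2_nonneg {N : ℕ} (α β p r : ℝ) (u : E N → ℝ) : 0 ≤ ray2 α β p r u := by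
  unfold ray2
  have h1 : 0 ≤ ∫ x in ball (0 : E N) 1, ‖x‖ ^ (-β * (r - 1)) * |lap u x| ^ r :=
    integral_nonneg fun x => by positivity
  have h2 : 0 ≤ ∫ x in ball (0 : E N) 1, ‖x‖ ^ α * |u x| ^ (p + 1) :=
    integral_nonneg fun x => by positivity
  positivity

/-- Calanchi–Ruf upper estimate for the ground-state level:
S_{α,β} ≤ C α^{2r - N + Nr/(p+1)} for α large. -/
theorem stmt17 {N : ℕ} (hN : 3 ≤ N) (β p q r : ℝ)
    (hβ : 0 < β) (hp : 1 < p) (hq : 1 < q)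
    (hhyp : (N : ℝ) / (p + 1) + (N : ℝ) / (q + 1) > (N : ℝ) - 2)
    (hr : r = (q + 1) / q) :
    ∃ C α₀ : ℝ, 0 < C ∧ 0 < α₀ ∧ ∀ α : ℝ, α₀ ≤ α →
      (∃ u : E N → ℝ, memD u ∧
        ray2 α β p r u ≤ C * α ^ (2 * r - (N : ℝ) + (N : ℝ) * r / (p + 1))) ∧
      S2 N α β p r ≤ C * α ^ (2 * r - (N : ℝ) + (N : ℝ) * r / (p + 1)) := by
  have hr1 : 1 < r := by
    rw [hr, lt_div_iff₀ (by linarith)]; linarith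
  let ψ : ContDiffBump (0 : E N) := ⟨1 / 2, 1, by norm_num, by norm_num⟩
  have hψ : ContDiff ℝ 2 ψ := ψ.contDiff
  obtain ⟨M, hM0, hM⟩ := lap_bound hψ ψ.hasCompactSupport
  set V : ℝ := volume.real (ball (0 : E N) 1) with hV
  have hV0 : 0 < V := by
    rw [hV, measureReal_def]
    exact ENNReal.toReal_pos (measure_ball_pos _ _ one_pos).ne' measure_ball_lt_top.ne
  set K : ℝ := (1 / 2 : ℝ) ^ (-β * (r - 1)) with hK
  have hK0 : 0 < K := by positivity
  set c : ℝ := (1 / 2 : ℝ) ^ 6 * ((1 / 2) ^ N * V) with hc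
  have hc0 : 0 < c := by positivity
  set s : ℝ := r / (p + 1) with hs
  have hs0 : 0 < s := by rw [hs]; apply div_pos <;> linarith
  suffices H : ∀ α : ℝ, 6 ≤ α → ∃ u : E N → ℝ, memD u ∧
        ray2 α β p r u ≤ (K * M ^ r * V / c ^ s) *
          α ^ (2 * r - (N : ℝ) + (N : ℝ) * r / (p + 1)) by
    refine ⟨K * M ^ r * V / c ^ s, 6, by positivity, by norm_num, fun α hα => ?_⟩
    obtain ⟨u, hu, hle⟩ := H α hα
    refine ⟨⟨u, hu, hle⟩, csInf_le_of_le ?_ ⟨u, hu, rfl⟩ hle⟩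
    exact ⟨0, by rintro _ ⟨w, _, rfl⟩; exact ray2_nonneg _ _ _ _ _⟩
  intro α hα
  have hα0 : 0 < α := by linarith
  have h3 : 3 / α ≤ 1 / 2 := by rw [div_le_iff₀ hα0]; linarith
  have hi0 : 0 < 1 / α := by positivity
  have h31 : 3 / α = 3 * (1 / α) := by ring
  set x0 : E N := EuclideanSpace.single (⟨0, by omega⟩ : Fin N) (1 - 2 * (1 / α)) with hx0
  have hx0n : ‖x0‖ = 1 - 2 * (1 / α) := by
    rw [hx0, EuclideanSpace.norm_single, Real.norm_eq_abs, abs_of_nonneg]; linarith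
  let u : E N → ℝ := fun x => ψ (α • (x - x0))
  have hnear : ∀ x ∈ closedBall x0 (1 / α), 1 - 3 / α ≤ ‖x‖ ∧ ‖x‖ < 1 := by
    intro x hx
    rw [mem_closedBall, dist_eq_norm] at hx
    have a1 := norm_sub_norm_le x x0
    have a2 := norm_sub_norm_le x0 x
    rw [norm_sub_rev] at a2
    constructor <;> linarith
  have hAB : closedBall x0 (1 / α) ⊆ ball 0 1 := fun x hx => by
    rw [mem_ball_zero_iff]; exact (hnear x hx).2
  have hA'A : closedBall x0 (1 / 2 * (1 / α)) ⊆ closedBall x0 (1 / α) :=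
    closedBall_subset_closedBall (by linarith)
  have hscale : ∀ x, ‖α • (x - x0)‖ = α * dist x x0 := fun x => by
    rw [norm_smul, Real.norm_eq_abs, abs_of_pos hα0, dist_eq_norm]
  have hout : ∀ x, x ∉ closedBall x0 (1 / α) → α • (x - x0) ∉ closedBall (0 : E N) 1 := by
    intro x hx
    rw [mem_closedBall, not_le, div_lt_iff₀ hα0] at hx
    rw [mem_closedBall_zero_iff, hscale, not_le]; linarith
  have hu0 : ∀ x, x ∉ closedBall x0 (1 / α) → u x = 0 := by
    intro x hx
    apply ψ.zero_of_le_dist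
    have := hout x hx
    rw [mem_closedBall, not_le] at this
    exact this.le
  have hu1 : ∀ x ∈ closedBall x0 (1 / 2 * (1 / α)), u x = 1 := by
    intro x hx
    apply ψ.one_of_mem_closedBall
    rw [mem_closedBall_zero_iff, hscale]
    rw [mem_closedBall] at hx
    have : α * (1 / 2 * (1 / α)) = 1 / 2 := by field_simp
    show _ ≤ (1 / 2 : ℝ)
    rw [← this]; gcongr
  have hlap : ∀ x, lap u x = α ^ 2 * lap ψ (α • (x - x0)) := lap_scale hψ α x0
  have hlap0 : ∀ x, x ∉ closedBall x0 (1 / α) → lap u x = 0 := by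
    intro x hx
    rw [hlap, lap_eq_zero, mul_zero]
    rw [ψ.tsupport_eq]; exact hout x hx
  have huC : ContDiff ℝ 2 u := hψ.comp ((contDiff_id.sub contDiff_const).const_smul α)
  have hxm : x0 ∈ closedBall x0 (1 / 2 * (1 / α)) := mem_closedBall_self (by positivity)
  refine ⟨u, ⟨huC.contDiffOn, fun x hx => hu0 x fun h => by linarith [(hnear x h).2],
    x0, ball_subset_closedBall (hAB (hA'A hxm)), by rw [hu1 x0 hxm]; norm_num⟩, ?_⟩
  have hnum : (∫ x in ball (0 : E N) 1, ‖x‖ ^ (-β * (r - 1)) * |lap u x| ^ r)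
      ≤ K * (α ^ 2 * M) ^ r * ((1 / α) ^ N * V) := by
    rw [setIntegral_eq_of_subset_of_forall_diff_eq_zero measurableSet_ball hAB (fun x hx => by
      rw [hlap0 x hx.2, abs_zero, Real.zero_rpow (by linarith), mul_zero])]
    have hv : volume.real (closedBall x0 (1 / α)) = (1 / α) ^ N * V := by
      rw [Measure.addHaar_real_closedBall _ _ hi0.le, finrank_euclideanSpace_fin]
    rw [← hv]
    refine (le_abs_self _).trans ?_
    rw [← Real.norm_eq_abs]
    refine norm_setIntegral_le_of_norm_le_const measure_closedBall_lt_top fun x hx => ?_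
    rw [Real.norm_of_nonneg (by positivity)]
    have hx1 := (hnear x hx).1
    gcongr
    · exact Real.rpow_le_rpow_of_nonpos (by norm_num) (by linarith) (by nlinarith)
    · rw [hlap, abs_mul, abs_of_nonneg (by positivity)]
      gcongr
      exact hM _
  have hden : c * (1 / α) ^ N ≤ ∫ x in ball (0 : E N) 1, ‖x‖ ^ α * |u x| ^ (p + 1) := by
    have hcont : Continuous fun x : E N => ‖x‖ ^ α * |u x| ^ (p + 1) :=
      (continuous_norm.rpow_const fun _ => Or.inr hα0.le).mul
        (huC.continuous.abs.rpow_const fun _ => Or.inr (by linarith))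
    have hint : IntegrableOn (fun x : E N => ‖x‖ ^ α * |u x| ^ (p + 1)) (ball 0 1) :=
      (hcont.continuousOn.integrableOn_compact (isCompact_closedBall 0 1)).mono_set
        ball_subset_closedBall
    have hv : volume.real (closedBall x0 (1 / 2 * (1 / α))) = (1 / 2 * (1 / α)) ^ N * V := by
      rw [Measure.addHaar_real_closedBall _ _ (by positivity), finrank_euclideanSpace_fin]
    calc c * (1 / α) ^ N
        = (1 / 2) ^ 6 * volume.real (closedBall x0 (1 / 2 * (1 / α))) := by
          rw [hv, hc, mul_pow]; ring
      _ ≤ ∫ x in closedBall x0 (1 / 2 * (1 / α)), ‖x‖ ^ α * |u x| ^ (p + 1) := by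
          have := setIntegral_mono_on (μ := volume) (s := closedBall x0 (1 / 2 * (1 / α)))
            (f := fun _ => (1 / 2 : ℝ) ^ 6)
            (integrableOn_const measure_closedBall_lt_top.ne)
            (hint.mono_set (hA'A.trans hAB)) measurableSet_closedBall (fun x hx => by
              rw [hu1 x hx, abs_one, Real.one_rpow, mul_one]
              exact weight_low hα (hnear x (hA'A hx)).1)
          rw [setIntegral_const, smul_eq_mul, mul_comm] at this
          exact this
      _ ≤ _ := setIntegral_mono_set hint (ae_of_all _ fun x => by positivity)
          (hA'A.trans hAB).eventuallyLE
  have hfin : K * (α ^ 2 * M) ^ r * ((1 / α) ^ N * V) / (c * (1 / α) ^ N) ^ s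
      = (K * M ^ r * V / c ^ s) * α ^ (2 * r - (N : ℝ) + (N : ℝ) * r / (p + 1)) := by
    have e1 : (1 / α) ^ N = α ^ (-(N : ℝ)) := by
      rw [Real.rpow_neg hα0.le, Real.rpow_natCast, one_div, inv_pow]
    have e2 : (α ^ 2) ^ r = α ^ (2 * r) := by
      rw [Real.rpow_mul hα0.le]; norm_num
    have e3 : (N : ℝ) * r / (p + 1) = N * s := by rw [hs]; ring
    rw [Real.mul_rpow (by positivity) hM0.le, e2, e1, Real.mul_rpow hc0.le (by positivity),
      ← Real.rpow_mul hα0.le, e3, sub_eq_add_neg, Real.rpow_add hα0, Real.rpow_add hα0,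
      neg_mul, Real.rpow_neg hα0.le (N * s)]
    field_simp
  rw [← hfin]
  unfold ray2
  gcongr
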